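/- Let k be a field of characteristic zero and A a commutative k-algebra (not assumed noetherian). If the s-th exterior power ⋀^s_A Ω_{A/k} = 0, then there is no injective k-algebra homomorphism from the polynomial ring k[t₁, …, t_s] to A. -/

import Mathlib

/-!
An injection `k[t₁, …, t_s] → A` provides algebraically independent elements `x₁, …, x_s` of `A`,
and the claim is that `dx₁ ∧ ⋯ ∧ dx_s ≠ 0`. Minimal primes lift along injective maps, so, for a
minimal prime `p` of `k` with `k ⧸ p` of characteristic zero, the minimal prime `p[t₁, …, t_s]` is
the contraction of a prime `P` of `A`. The images of the `xᵢ` in the field `L = Frac (A ⧸ P)` are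
then algebraically independent over `k ⧸ p`. Since `L` has characteristic zero, it is formally
smooth over `(k ⧸ p)[t₁, …, t_s]`, so the `dtᵢ` stay linearly independent in `Ω[L⁄k ⧸ p]`. Their
wedge product there is nonzero, and it is the image of `dx₁ ∧ ⋯ ∧ dx_s`.
-/

open Algebra KaehlerDifferential
open scoped nonZeroDivisors

section ExteriorPower

variable {K V : Type*} [Field K] [AddCommGroup V] [Module K V] {n : ℕ}

lemma ιMulti_ne_zero_of_linearIndependent {v : Fin n → V} (hv : LinearIndependent K v) :
    exteriorPower.ιMulti K n v ≠ 0 := by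
  simpa [exteriorPower.ιMulti_family] using
    (exteriorPower.ιMulti_family_linearIndependent_field n hv).ne_zero
      (Set.powersetCard.ofFinEmbEquiv (RelEmbedding.refl _))

lemma ιMulti_ne_zero_of_linearIndependent_map {R M : Type*} [CommRing R] [Algebra R K]
    [AddCommGroup M] [Module R M] [Module R V] [IsScalarTower R K V] (φ : M →ₗ[R] V)
    {m : Fin n → M} (h : LinearIndependent K (φ ∘ m)) : exteriorPower.ιMulti R n m ≠ 0 := by
  let Φ : ExteriorAlgebra R M →ₐ[R] ExteriorAlgebra K V :=
    ExteriorAlgebra.lift R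
      ⟨(ExteriorAlgebra.ι K).restrictScalars R ∘ₗ φ, fun _ ↦ ExteriorAlgebra.ι_sq_zero _⟩
  have hΦι (x : M) : Φ (ExteriorAlgebra.ι R x) = ExteriorAlgebra.ι K (φ x) :=
    ExteriorAlgebra.lift_ι_apply ..
  have hΦ : Φ (exteriorPower.ιMulti R n m) = exteriorPower.ιMulti K n (φ ∘ m) := by
    simp [ExteriorAlgebra.ιMulti_apply, map_list_prod, List.map_ofFn, Function.comp_def, hΦι]
  intro hm
  refine ιMulti_ne_zero_of_linearIndependent h (Subtype.ext ?_)
  rw [← hΦ, hm, ZeroMemClass.coe_zero, map_zero, ZeroMemClass.coe_zero]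

end ExteriorPower

section FormallySmooth

lemma mapBaseChange_injective_of_formallySmooth (R S T : Type*) [CommRing R] [CommRing S]
    [CommRing T] [Algebra R S] [Algebra R T] [Algebra S T] [IsScalarTower R S T]
    [FormallySmooth S T] : Function.Injective (mapBaseChange R S T) := by
  rw [injective_iff_map_eq_zero]
  intro ω hω
  obtain ⟨c, rfl⟩ := (H1Cotangent.exact_δ_mapBaseChange R S T ω).mp hω
  rw [Subsingleton.elim c 0, map_zero]

lemma formallySmooth_of_charZero (K L : Type*) [Field K] [CharZero K] [Field L] [Algebra K L] :
    FormallySmooth K L := by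
  obtain ⟨b, hb⟩ := exists_isTranscendenceBasis K L
  have := hb.isAlgebraic_field
  exact .of_algebraicIndependent_of_isSeparable hb.1

lemma formallySmooth_of_faithfulSMul_of_charZero (R L : Type*) [CommRing R] [Field L]
    [CharZero L] [Algebra R L] [FaithfulSMul R L] : FormallySmooth R L := by
  have : IsDomain R := (FaithfulSMul.algebraMap_injective R L).isDomain
  let := FractionRing.liftAlgebra R L
  have : CharZero (FractionRing R) := (algebraMap (FractionRing R) L).charZero
  have : FormallySmooth R (FractionRing R) := .of_isLocalization R⁰
  have := formallySmooth_of_charZero (FractionRing R) L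
  exact .comp R (FractionRing R) L

lemma linearIndependent_D_of_algebraicIndependent {ι R L : Type*} [CommRing R] [Field L]
    [CharZero L] [Algebra R L] {x : ι → L} (hx : AlgebraicIndependent R x) :
    LinearIndependent L (D R L ∘ x) := by
  let : Algebra (MvPolynomial ι R) L := (MvPolynomial.aeval x).toAlgebra
  have : IsScalarTower R (MvPolynomial ι R) L :=
    .of_algebraMap_eq' (MvPolynomial.aeval x).comp_algebraMap.symm
  have : FaithfulSMul (MvPolynomial ι R) L := (faithfulSMul_iff_algebraMap_injective _ _).mpr hx
  have := formallySmooth_of_faithfulSMul_of_charZero (MvPolynomial ι R) L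
  have algebraMap_X (i : ι) : algebraMap (MvPolynomial ι R) L (.X i) = x i :=
    MvPolynomial.aeval_X x i
  have hdX := ((mvPolynomialBasis R ι).baseChange L).linearIndependent.map'
    (mapBaseChange R (MvPolynomial ι R) L)
    (LinearMap.ker_eq_bot.mpr (mapBaseChange_injective_of_formallySmooth _ _ _))
  have hD : mapBaseChange R (MvPolynomial ι R) L ∘ (mvPolynomialBasis R ι).baseChange L =
      D R L ∘ x := by
    ext i
    simp [algebraMap_X]
  rwa [hD] at hdX

end FormallySmooth

section MinimalPrimes

lemma exists_mem_minimalPrimes_charZero_quotient (R : Type*) [CommRing R] [CharZero R] :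
    ∃ p ∈ minimalPrimes R, CharZero (R ⧸ p) := by
  have hbot : (⊥ : Ideal ℤ) ∈ ((⊥ : Ideal R).comap (algebraMap ℤ R)).minimalPrimes := by
    rw [Ideal.comap_bot_of_injective _ (FaithfulSMul.algebraMap_injective ℤ R)]
    exact (IsDomain.minimalPrimes_eq_singleton_bot ℤ).ge rfl
  obtain ⟨p, hp, hpℤ⟩ := Ideal.exists_minimalPrimes_comap_eq (algebraMap ℤ R) ⊥ hbot
  refine ⟨p, hp, charZero_of_injective_algebraMap (R := ℤ) ?_⟩
  rw [RingHom.injective_iff_ker_eq_bot, ← hpℤ, IsScalarTower.algebraMap_eq ℤ R (R ⧸ p),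
    ← RingHom.comap_ker, Ideal.Quotient.algebraMap_eq, Ideal.mk_ker]

variable {R : Type*} [CommRing R]

lemma ker_map_quotient_mk {σ : Type*} (p : Ideal R) :
    RingHom.ker (MvPolynomial.map (σ := σ) (Ideal.Quotient.mk p)) = p.map MvPolynomial.C := by
  rw [MvPolynomial.ker_map, Ideal.mk_ker]

lemma comap_C_map_C {σ : Type*} (p : Ideal R) :
    (p.map (MvPolynomial.C (σ := σ))).comap MvPolynomial.C = p := by
  ext r
  simp [← ker_map_quotient_mk, RingHom.mem_ker, Ideal.Quotient.eq_zero_iff_mem]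

lemma map_C_mem_minimalPrimes {σ : Type*} {p : Ideal R} (hp : p ∈ minimalPrimes R) :
    p.map (MvPolynomial.C (σ := σ)) ∈ minimalPrimes (MvPolynomial σ R) := by
  have := hp.isPrime
  have hprime : (p.map (MvPolynomial.C (σ := σ))).IsPrime :=
    ker_map_quotient_mk (σ := σ) p ▸ RingHom.ker_isPrime _
  refine ⟨⟨hprime, bot_le⟩, fun Q ⟨_, _⟩ hQp ↦ ?_⟩
  have hcomap : Q.comap MvPolynomial.C ≤ p := (Ideal.comap_mono hQp).trans_eq (comap_C_map_C p)
  exact Ideal.map_le_iff_le_comap.mpr (hp.2 ⟨inferInstance, bot_le⟩ hcomap)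

lemma exists_liesOver_algebraicIndependent_quotient {A ι : Type*} [CommRing A] [Algebra R A]
    {x : ι → A} (hx : AlgebraicIndependent R x) {p : Ideal R} (hp : p ∈ minimalPrimes R) :
    ∃ (P : Ideal A) (_ : P.IsPrime) (_ : P.LiesOver p),
      AlgebraicIndependent (R ⧸ p) (Ideal.Quotient.mk P ∘ x) := by
  obtain ⟨P, hP, hPp⟩ := Ideal.exists_comap_eq_of_mem_minimalPrimes_of_injective
    (f := (MvPolynomial.aeval x : MvPolynomial ι R →ₐ[R] A).toRingHom) hx _
    (map_C_mem_minimalPrimes hp)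
  have hover : P.LiesOver p := by
    constructor
    rw [← comap_C_map_C (σ := ι) p, ← hPp, Ideal.comap_comap]
    exact congrArg P.comap (MvPolynomial.aeval x).comp_algebraMap
  refine ⟨P, hP, hover, (injective_iff_map_eq_zero _).mpr fun g hg ↦ ?_⟩
  obtain ⟨f, rfl⟩ := MvPolynomial.map_surjective _ Ideal.Quotient.mk_surjective g
  have hf : Ideal.Quotient.mk P (MvPolynomial.aeval x f) = 0 := by
    rw [← hg, ← Ideal.Quotient.algebraMap_eq p, MvPolynomial.aeval_map_algebraMap]
    exact MvPolynomial.comp_aeval_apply x (Ideal.Quotient.mkₐ R P) f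
  have hfp : f ∈ p.map MvPolynomial.C := by
    rw [← hPp]
    exact Ideal.Quotient.eq_zero_iff_mem (I := P).mp hf
  rwa [← ker_map_quotient_mk] at hfp

end MinimalPrimes

theorem ιMulti_D_ne_zero_of_algebraicIndependent {k A : Type*} [CommRing k] [CharZero k]
    [CommRing A] [Algebra k A] {s : ℕ} {x : Fin s → A} (hx : AlgebraicIndependent k x) :
    exteriorPower.ιMulti A s (D k A ∘ x) ≠ 0 := by
  obtain ⟨p, hp, _⟩ := exists_mem_minimalPrimes_charZero_quotient k
  obtain ⟨P, _, _, hxP⟩ := exists_liesOver_algebraicIndependent_quotient hx hp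
  let L := FractionRing (A ⧸ P)
  have : FaithfulSMul (k ⧸ p) L := .trans (k ⧸ p) (A ⧸ P) L
  have : CharZero L :=
    charZero_of_injective_algebraMap (FaithfulSMul.algebraMap_injective (k ⧸ p) L)
  have hxL : AlgebraicIndependent (k ⧸ p) (algebraMap A L ∘ x) :=
    hxP.map' (f := IsScalarTower.toAlgHom (k ⧸ p) (A ⧸ P) L) (FaithfulSMul.algebraMap_injective _ _)
  have hD : KaehlerDifferential.map k (k ⧸ p) A L ∘ D k A ∘ x =
      D (k ⧸ p) L ∘ algebraMap A L ∘ x := by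
    ext i
    simp
  exact ιMulti_ne_zero_of_linearIndependent_map (K := L) (KaehlerDifferential.map k (k ⧸ p) A L)
    (hD ▸ linearIndependent_D_of_algebraicIndependent hxL)

theorem no_polynomial_injection_of_vanishing_exterior_power_general
    (k A : Type*) [CommRing k] [CharZero k] [CommRing A] [Algebra k A]
    (s : ℕ) (h : Subsingleton (⋀[A]^s (Ω[A⁄k]))) :
    ¬ ∃ ι : MvPolynomial (Fin s) k →ₐ[k] A, Function.Injective ι := by
  rintro ⟨ι, hι⟩
  have hx : AlgebraicIndependent k (ι ∘ MvPolynomial.X) :=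
    (MvPolynomial.algebraicIndependent_X (Fin s) k).map' hι
  exact ιMulti_D_ne_zero_of_algebraicIndependent hx (Subsingleton.elim _ _)

/-- Let `k` be a field of characteristic zero and `A` a commutative `k`-algebra (not
necessarily noetherian). If `⋀^s_A Ω_{A/k} = 0`, then there is no injective `k`-algebra
homomorphism from the polynomial ring `k[t₁, …, t_s]` to `A`. -/
theorem no_polynomial_injection_of_vanishing_exterior_power
    (k A : Type*) [Field k] [CharZero k] [CommRing A] [Algebra k A]
    (s : ℕ) (h : Subsingleton (⋀[A]^s (Ω[A⁄k]))) :
    ¬ ∃ ι : MvPolynomial (Fin s) k →ₐ[k] A, Function.Injective ι :=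
  no_polynomial_injection_of_vanishing_exterior_power_general k A s h
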